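/- For every integer e ≥ 5, there exists a finite metabelian group U of order 3^{e+8}, generated by two elements x and y satisfying x^{3^{e+1}} = 1, y^3 = s₃ s₄^2, s₂^3 = s₄ t₄^2, s₃^3 = s₅, t₃^3 = s₅^2, [x^3, y] = s₄ t₄ s₅^2, [x^3, s₂] = s₅, and t₅ = s₅, whose abelianization is isomorphic to (ZMod (3^{e+1})) × (ZMod 3). -/

import Mathlib

/-- The commutator `[a,b] = a⁻¹ * b⁻¹ * a * b`. -/
def comm' {G : Type*} [Group G] (a b : G) : G := a⁻¹ * b⁻¹ * a * b

/-- `s₂ = [y,x]` and `s_j = [s_(j-1), x]` for `j ≥ 3`. -/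
def sgen {G : Type*} [Group G] (x y : G) : ℕ → G
  | 0 => 1
  | 1 => 1
  | 2 => comm' y x
  | (n + 3) => comm' (sgen x y (n + 2)) x

/-- `t_j = [s_(j-1), y]` for `j ≥ 3`. -/
def tgenD {G : Type*} [Group G] (x y : G) (j : ℕ) : G := comm' (sgen x y (j - 1)) y

/-- `t₂ = [y,x]` and `t_j = [t_(j-1), y]` for `j ≥ 3`. -/
def tgenB {G : Type*} [Group G] (x y : G) : ℕ → G
  | 0 => 1
  | 1 => 1
  | 2 => comm' y x
  | (n + 3) => comm' (tgenB x y (n + 2)) y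

/-- A σ-group: a group admitting an automorphism acting as inversion on the
abelianization. -/
def IsSigmaGroup (G : Type*) [Group G] : Prop :=
  ∃ σ : G ≃* G, ∀ g : G, Abelianization.of (σ g) = (Abelianization.of g)⁻¹

/-- A group is metabelian if its commutator subgroup is abelian, i.e. the second
derived subgroup is trivial. -/
def IsMetabelian (G : Type*) [Group G] : Prop := derivedSeries G 2 = ⊥

/-- The free rank-four ring `ℤ[u,v]/(uv - 3, u² - v²)` on the basis `1, v, u, u²`. -/
@[ext] structure SS where
  a : ℤ
  b : ℤ
  c : ℤ
  d : ℤ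

namespace SS
instance : Zero SS := ⟨⟨0, 0, 0, 0⟩⟩
instance : One SS := ⟨⟨1, 0, 0, 0⟩⟩
instance : Add SS := ⟨fun p q => ⟨p.a + q.a, p.b + q.b, p.c + q.c, p.d + q.d⟩⟩
instance : Neg SS := ⟨fun p => ⟨-p.a, -p.b, -p.c, -p.d⟩⟩
instance : Mul SS := ⟨fun p q =>
  ⟨p.a * q.a + 3 * (p.b * q.c + p.c * q.b) + 9 * (p.d * q.d),
   p.a * q.b + p.b * q.a + 3 * (p.c * q.d + p.d * q.c),
   p.a * q.c + p.c * q.a + 3 * (p.b * q.d + p.d * q.b),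
   p.a * q.d + p.d * q.a + p.b * q.b + p.c * q.c⟩⟩

theorem zero_def : (0 : SS) = ⟨0, 0, 0, 0⟩ := rfl
theorem one_def : (1 : SS) = ⟨1, 0, 0, 0⟩ := rfl
theorem add_def (p q : SS) : p + q = ⟨p.a + q.a, p.b + q.b, p.c + q.c, p.d + q.d⟩ := rfl
theorem neg_def (p : SS) : -p = ⟨-p.a, -p.b, -p.c, -p.d⟩ := rfl
theorem mul_def (p q : SS) : p * q =
  ⟨p.a * q.a + 3 * (p.b * q.c + p.c * q.b) + 9 * (p.d * q.d),
   p.a * q.b + p.b * q.a + 3 * (p.c * q.d + p.d * q.c),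
   p.a * q.c + p.c * q.a + 3 * (p.b * q.d + p.d * q.b),
   p.a * q.d + p.d * q.a + p.b * q.b + p.c * q.c⟩ := rfl

instance : CommRing SS where
  add_assoc p q r := by ext <;> simp only [add_def] <;> ring
  zero_add p := by ext <;> simp only [add_def, zero_def] <;> ring
  add_zero p := by ext <;> simp only [add_def, zero_def] <;> ring
  add_comm p q := by ext <;> simp only [add_def] <;> ring
  neg_add_cancel p := by ext <;> simp only [add_def, zero_def, neg_def] <;> ring
  mul_assoc p q r := by ext <;> simp only [mul_def] <;> ring
  mul_comm p q := by ext <;> simp only [mul_def] <;> ring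
  one_mul p := by ext <;> simp only [mul_def, one_def] <;> ring
  mul_one p := by ext <;> simp only [mul_def, one_def] <;> ring
  zero_mul p := by ext <;> simp only [mul_def, zero_def] <;> ring
  mul_zero p := by ext <;> simp only [mul_def, zero_def] <;> ring
  left_distrib p q r := by ext <;> simp only [mul_def, add_def] <;> ring
  right_distrib p q r := by ext <;> simp only [mul_def, add_def] <;> ring
  nsmul := nsmulRec
  zsmul := zsmulRec

def u : SS := ⟨0, 0, 1, 0⟩
def v : SS := ⟨0, 1, 0, 0⟩

theorem three_def : (3 : SS) = ⟨3, 0, 0, 0⟩ := by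
  have : (3 : SS) = 1 + 1 + 1 := by norm_num
  rw [this]; rfl

theorem int_def (n : ℤ) : (n : SS) = ⟨n, 0, 0, 0⟩ := by
  induction n using Int.induction_on with
  | zero => simp [zero_def]
  | succ i ih => push_cast at *; rw [ih]; rfl
  | pred i ih =>
    push_cast at *; rw [sub_eq_add_neg, ih]; rfl

/-- additive coordinates modulo 9, 9, 3, 3 -/
def f : SS →+ ZMod 9 × ZMod 9 × ZMod 3 × ZMod 3 where
  toFun p := (p.a, p.b, p.c, p.d)
  map_zero' := by simp [zero_def]
  map_add' p q := by simp [add_def]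

theorem f_surj : Function.Surjective f := by
  rintro ⟨a, b, c, d⟩
  obtain ⟨a, rfl⟩ := ZMod.intCast_surjective a
  obtain ⟨b, rfl⟩ := ZMod.intCast_surjective b
  obtain ⟨c, rfl⟩ := ZMod.intCast_surjective c
  obtain ⟨d, rfl⟩ := ZMod.intCast_surjective d
  exact ⟨⟨a, b, c, d⟩, rfl⟩

theorem f_zero (p : SS) : f p = 0 ↔ 9 ∣ p.a ∧ 9 ∣ p.b ∧ 3 ∣ p.c ∧ 3 ∣ p.d := by
  have h9 (n : ℤ) : (n : ZMod 9) = 0 ↔ 9 ∣ n := ZMod.intCast_zmod_eq_zero_iff_dvd n 9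
  have h3 (n : ℤ) : (n : ZMod 3) = 0 ↔ 3 ∣ n := ZMod.intCast_zmod_eq_zero_iff_dvd n 3
  show ((p.a : ZMod 9), (p.b : ZMod 9), (p.c : ZMod 3), (p.d : ZMod 3)) = (0, 0, 0, 0) ↔ _
  simp only [Prod.mk.injEq, h9, h3]

def I : Ideal SS where
  carrier := {p | f p = 0}
  zero_mem' := map_zero f
  add_mem' {p q} hp hq := by
    simp only [Set.mem_ofPred_eq] at *
    rw [map_add, hp, hq, add_zero]
  smul_mem' r p hp := by
    simp only [Set.mem_ofPred_eq, f_zero, smul_eq_mul, mul_def] at *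
    obtain ⟨⟨a, ha⟩, ⟨b, hb⟩, ⟨c, hc⟩, ⟨d, hd⟩⟩ := hp
    rw [ha, hb, hc, hd]
    refine ⟨⟨r.a * a + r.b * c + 3 * (r.c * b) + 3 * (r.d * d), by ring⟩,
      ⟨r.a * b + r.b * a + r.c * d + r.d * c, by ring⟩,
      ⟨r.a * c + 3 * (r.c * a) + 3 * (r.b * d) + 9 * (r.d * b), by ring⟩,
      ⟨r.a * d + 3 * (r.d * a) + 3 * (r.b * b) + r.c * c, by ring⟩⟩

end SS

def RR : Type := SS ⧸ SS.I

namespace RR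
instance : CommRing RR := inferInstanceAs (CommRing (SS ⧸ SS.I))
def mk : SS →+* RR := Ideal.Quotient.mk SS.I
theorem mk_surj : Function.Surjective mk := Ideal.Quotient.mk_surjective
theorem mk_eq_zero (p : SS) : mk p = 0 ↔ SS.f p = 0 :=
  Ideal.Quotient.eq_zero_iff_mem

theorem bij : Nonempty (RR ≃ ZMod 9 × ZMod 9 × ZMod 3 × ZMod 3) := by
  have key (p q : SS) : mk p = mk q ↔ SS.f p = SS.f q := by
    rw [← sub_eq_zero, ← map_sub, mk_eq_zero, map_sub, sub_eq_zero]
  choose g hg using mk_surj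
  refine ⟨Equiv.ofBijective (fun r => SS.f (g r)) ⟨fun r s h => ?_, fun t => ?_⟩⟩
  · have := (key _ _).2 h
    rwa [hg, hg] at this
  · obtain ⟨p, rfl⟩ := SS.f_surj t
    exact ⟨mk p, (key _ _).1 (hg _)⟩

theorem card : Nat.card RR = 3 ^ 6 := by
  obtain ⟨h⟩ := bij
  rw [Nat.card_congr h]
  simp

instance : Finite RR := by
  obtain ⟨h⟩ := bij
  exact Finite.of_equiv _ h.symm

def u : RR := mk SS.u
def v : RR := mk SS.v
theorem huv : u * v = 3 := by
  rw [u, v, ← map_mul, show SS.u * SS.v = 3 by rw [SS.three_def]; rfl]; exact map_ofNat mk 3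
theorem huu : u * u = v * v := by
  rw [u, v, ← map_mul, ← map_mul]; rfl
theorem h3u : 3 * u = 0 := by
  have : (3 : RR) = mk 3 := (map_ofNat mk 3).symm
  rw [u, this, ← map_mul, mk_eq_zero, SS.f_zero, SS.three_def]
  simp [SS.u, SS.mul_def]

def X : RR := 5 * (u + v)
def Y : RR := 5 * (u - v)

theorem h9 : (9 : RR) = 0 := by linear_combination (-3) * huv + v * h3u
theorem hXY : X * Y = 0 := by
  unfold X Y; linear_combination 25 * huu
theorem hX3 : X ^ 3 = Y ^ 3 := by
  have := huv; have := huu; have := h3u; have := h9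
  unfold X Y; grind
theorem h3 : (3 : RR) = X ^ 2 + 2 * Y ^ 2 := by
  have := huv; have := huu; have := h3u; have := h9
  unfold X Y; grind
theorem h3X : 3 * X = X ^ 3 := by
  have := h3; have := hXY; grind
theorem h3Y : 3 * Y = 2 * X ^ 3 := by
  have := h3; have := hXY; have := hX3; grind
theorem hX4 : X ^ 4 = 0 := by
  have := hXY; have := hX3; grind
theorem h3XX : 3 * X ^ 2 = 0 := by
  have := h3X; have := hX4; grind
theorem h3YY : 3 * Y ^ 2 = 0 := by
  have := h3Y; have := hX3; have := hXY; grind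
theorem h3XXX : 3 * X ^ 3 = 0 := by
  have := h3XX; grind

theorem top_of (T : AddSubgroup RR) (h1 : (1 : RR) ∈ T) (hX : ∀ a ∈ T, X * a ∈ T)
    (hY : ∀ a ∈ T, Y * a ∈ T) (r : RR) : r ∈ T := by
  have hx : X ∈ T := by simpa using hX 1 h1
  have hy : Y ∈ T := by simpa using hY 1 h1
  have hu : u ∈ T := by
    have : u = X + Y := by unfold X Y; linear_combination (-u) * h9
    rw [this]; exact T.add_mem hx hy
  have hv : v ∈ T := by
    have : v = X - Y := by unfold X Y; linear_combination (-v) * h9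
    rw [this]; exact T.sub_mem hx hy
  have huu' : u * u ∈ T := by
    have : u * u = X * X + Y * Y := by
      have := huv; have := huu; have := h3u; have := h9
      unfold X Y; grind
    rw [this]; exact T.add_mem (hX _ hx) (hY _ hy)
  obtain ⟨p, rfl⟩ := mk_surj r
  have : mk p = p.a • (1 : RR) + p.b • v + p.c • u + p.d • (u * u) := by
    simp only [zsmul_eq_mul, u, v]
    have e : p = (p.a : SS) * 1 + (p.b : SS) * SS.v + (p.c : SS) * SS.u
        + (p.d : SS) * (SS.u * SS.u) := by
      ext <;> simp [SS.int_def, SS.mul_def, SS.add_def, SS.u, SS.v, SS.one_def]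
    conv_lhs => rw [e]
    simp
  rw [this]
  exact T.add_mem (T.add_mem (T.add_mem (T.zsmul_mem h1 _) (T.zsmul_mem hv _))
    (T.zsmul_mem hu _)) (T.zsmul_mem huu' _)

def z : RR := X + 2 * X ^ 2
theorem hYz : Y * z = 0 := by unfold z; have := hXY; grind
theorem hy3 : (1 + Y) ^ 3 = 1 := by
  linear_combination h3Y + h3YY - hX3 + h3XXX
theorem hN : X * z = 1 + (1 + Y) + (1 + Y) ^ 2 := by
  unfold z; linear_combination - h3 - h3Y - h3YY
/-- action of a power of `y` -/
def p (i : ZMod 3) : RR := (1 + Y) ^ i.val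
def q : ZMod 3 → RR := ![0, 1, 1 + (1 + Y)]
/-- the carry cocycle -/
def kk (i j : ZMod 3) : ℕ := if i.val + j.val < 3 then 0 else 1

theorem p0 : p 0 = 1 := by simp [p]
theorem p1 : p 1 = 1 + Y := by show (1 + Y) ^ 1 = _; simp
theorem p2 : p 2 = (1 + Y) ^ 2 := rfl
theorem p_add (i j : ZMod 3) : p (i + j) = p i * p j := by
  have hc : ∀ i : ZMod 3, i = 0 ∨ i = 1 ∨ i = 2 := by decide
  have e11 : (1 + 1 : ZMod 3) = 2 := rfl
  have e12 : (1 + 2 : ZMod 3) = 0 := rfl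
  have e21 : (2 + 1 : ZMod 3) = 0 := rfl
  have e22 : (2 + 2 : ZMod 3) = 1 := rfl
  rcases hc i with rfl | rfl | rfl <;> rcases hc j with rfl | rfl | rfl <;>
    simp only [e11, e12, e21, e22, p0, p1, p2, add_zero, zero_add] <;>
    first | ring1 | linear_combination - hy3 | linear_combination - (1 + Y) * hy3
theorem p_z (i : ZMod 3) : p i * z = z := by
  have hc : ∀ i : ZMod 3, i = 0 ∨ i = 1 ∨ i = 2 := by decide
  rcases hc i with rfl | rfl | rfl <;> simp only [p0, p1, p2] <;>
    first | ring1 | linear_combination hYz | linear_combination (2 + Y) * hYz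
theorem kk_coc : ∀ i j l : ZMod 3, kk i j + kk (i + j) l = kk j l + kk i (j + l) := by decide
theorem q_add (i j : ZMod 3) : q (i + j) + X * (kk i j * z) = p j * q i + q j := by
  have hq : q 0 = 0 ∧ q 1 = 1 ∧ q 2 = 1 + (1 + Y) := ⟨rfl, rfl, rfl⟩
  obtain ⟨q0, q1, q2⟩ := hq
  have hc : ∀ i : ZMod 3, i = 0 ∨ i = 1 ∨ i = 2 := by decide
  have e11 : (1 + 1 : ZMod 3) = 2 := rfl
  have e12 : (1 + 2 : ZMod 3) = 0 := rfl
  have e21 : (2 + 1 : ZMod 3) = 0 := rfl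
  have e22 : (2 + 2 : ZMod 3) = 1 := rfl
  have K00 : kk 0 0 = 0 := rfl
  have K01 : kk 0 1 = 0 := rfl
  have K02 : kk 0 2 = 0 := rfl
  have K10 : kk 1 0 = 0 := rfl
  have K11 : kk 1 1 = 0 := rfl
  have K12 : kk 1 2 = 1 := rfl
  have K20 : kk 2 0 = 0 := rfl
  have K21 : kk 2 1 = 1 := rfl
  have K22 : kk 2 2 = 1 := rfl
  rcases hc i with rfl | rfl | rfl <;> rcases hc j with rfl | rfl | rfl <;>
    simp only [e11, e12, e21, e22, q0, q1, q2, p0, p1, p2, K00, K01, K02, K10, K11, K12, K20,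
      K21, K22, add_zero, zero_add, Nat.cast_zero, Nat.cast_one] <;>
    first | ring1 | linear_combination hN | linear_combination hN - hy3
theorem hx3 : (1 + X) ^ 3 = 1 + 2 * X ^ 3 := by
  linear_combination h3X + h3XX
theorem hx9 : (1 + X) ^ 9 = 1 := by
  have : (1 + X) ^ 9 = ((1 + X) ^ 3) ^ 3 := by ring
  rw [this, hx3]
  linear_combination (2 + 4 * X ^ 3) * h3XXX + 8 * X ^ 5 * hX4
theorem hsum9 : ∑ i ∈ Finset.range 9, (1 + X) ^ i = 0 := by
  have h : (1 + (1 + X) ^ 3 + (1 + X) ^ 6 : RR) = 3 := by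
    have : (1 + X) ^ 6 = ((1 + X) ^ 3) ^ 2 := by ring
    rw [this, hx3]
    linear_combination 2 * h3XXX + 4 * X ^ 2 * hX4
  have : ∑ i ∈ Finset.range 9, (1 + X) ^ i
      = (1 + (1 + X) ^ 3 + (1 + X) ^ 6 : RR) * (3 + 3 * X + X ^ 2) := by
    simp only [Finset.sum_range_succ, Finset.sum_range_zero]; ring
  rw [this, h]
  linear_combination h9 + 3 * h3X + h3XXX + h3XX
end RR

/-- The normal closure of `y`: pairs `(i, a)` standing for `y ^ i * a`. -/
@[ext] structure BB where
  i : ZMod 3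
  a : RR

namespace BB
open RR
instance : Mul BB := ⟨fun g h => ⟨g.i + h.i, kk g.i h.i * z + p h.i * g.a + h.a⟩⟩
instance : One BB := ⟨⟨0, 0⟩⟩
instance : Inv BB := ⟨fun g => ⟨-g.i, -(kk (-g.i) g.i * z + p (-g.i) * g.a)⟩⟩
theorem mul_def (g h : BB) : g * h = ⟨g.i + h.i, kk g.i h.i * z + p h.i * g.a + h.a⟩ := rfl
theorem one_def : (1 : BB) = ⟨0, 0⟩ := rfl
theorem inv_def (g : BB) : g⁻¹ = ⟨-g.i, -(kk (-g.i) g.i * z + p (-g.i) * g.a)⟩ := rfl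
theorem kk0 : ∀ i : ZMod 3, kk 0 i = 0 := by decide
theorem kk0' : ∀ i : ZMod 3, kk i 0 = 0 := by decide

instance : Group BB := Group.ofLeftAxioms
  (by
    intro g h l
    ext
    · simp only [mul_def]; ring
    · simp only [mul_def, p_add]
      have := congrArg (Nat.cast : ℕ → RR) (kk_coc g.i h.i l.i)
      push_cast at this
      linear_combination z * this + (kk g.i h.i : RR) * p_z l.i)
  (by intro g; ext <;> simp [mul_def, one_def, kk0])
  (by
    intro g
    ext
    · simp [mul_def, one_def, inv_def]
    · simp only [mul_def, one_def, inv_def]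
      have h1 : p g.i * p (-g.i) = 1 := by rw [← p_add, add_neg_cancel, p0]
      linear_combination - (kk (-g.i) g.i : RR) * p_z g.i - g.a * h1)

def equivProd : BB ≃ ZMod 3 × RR where
  toFun g := (g.i, g.a)
  invFun g := ⟨g.1, g.2⟩
  left_inv _ := rfl
  right_inv _ := rfl

instance : Finite BB := Finite.of_equiv _ equivProd.symm
theorem card : Nat.card BB = 3 ^ 7 := by
  rw [Nat.card_congr equivProd, Nat.card_prod, RR.card]; simp

def sg : BB →* BB where
  toFun g := ⟨g.i, q g.i + (1 + X) * g.a⟩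
  map_one' := by
    ext
    · rfl
    · show (0 : RR) + (1 + X) * 0 = 0
      ring
  map_mul' g h := by
    ext
    · rfl
    · simp only [mul_def]
      linear_combination q_add g.i h.i

theorem sg_apply (g : BB) : sg g = ⟨g.i, q g.i + (1 + X) * g.a⟩ := rfl

theorem sg_iter (n : ℕ) (g : BB) :
    (sg^[n]) g = ⟨g.i, (∑ i ∈ Finset.range n, (1 + X) ^ i) * q g.i + (1 + X) ^ n * g.a⟩ := by
  induction n with
  | zero => ext <;> simp
  | succ n ih =>
    rw [Function.iterate_succ_apply', ih, sg_apply]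
    ext
    · rfl
    · simp only
      rw [Finset.sum_range_succ']
      simp only [pow_succ, ← Finset.sum_mul]
      ring

theorem sg9 (g : BB) : (sg^[9]) g = g := by
  rw [sg_iter, hsum9, hx9]; ext <;> simp

def sgA : MulAut BB where
  toFun := sg
  invFun := sg^[8]
  left_inv g := by
    show (sg^[8]) (sg g) = g
    rw [← Function.iterate_succ_apply]; exact sg9 g
  right_inv g := by
    show sg ((sg^[8]) g) = g
    rw [← Function.iterate_succ_apply' (f := sg)]; exact sg9 g
  map_mul' := map_mul sg

theorem sgA_pow (n : ℕ) (g : BB) : (sgA ^ n) g = (sg^[n]) g := by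
  induction n with
  | zero => rfl
  | succ n ih => rw [pow_succ', MulAut.mul_apply, ih, Function.iterate_succ_apply']; rfl

theorem sgA9 : sgA ^ 9 = 1 := by
  ext1 g; rw [sgA_pow, sg9]; rfl

def phi (e : ℕ) (he : 5 ≤ e) : Multiplicative (ZMod (3 ^ (e + 1))) →* MulAut BB :=
  AddMonoidHom.toMultiplicativeLeft (ZMod.lift (3 ^ (e + 1))
    ⟨(zmultiplesHom (Additive (MulAut BB))) (Additive.ofMul sgA), by
      obtain ⟨k, rfl⟩ := Nat.exists_eq_add_of_le he
      rw [zmultiplesHom_apply, natCast_zsmul, ← ofMul_pow]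
      have : 3 ^ (5 + k + 1) = 9 * 3 ^ (4 + k) := by ring
      rw [this, pow_mul, sgA9, one_pow, ofMul_one]⟩)

theorem phi_one (e : ℕ) (he : 5 ≤ e) : phi e he (Multiplicative.ofAdd 1) = sgA := by
  have h := ZMod.lift_coe (3 ^ (e + 1)) (A := Additive (MulAut BB))
    ⟨(zmultiplesHom (Additive (MulAut BB))) (Additive.ofMul sgA), by
      obtain ⟨k, rfl⟩ := Nat.exists_eq_add_of_le he
      rw [zmultiplesHom_apply, natCast_zsmul, ← ofMul_pow]
      have : 3 ^ (5 + k + 1) = 9 * 3 ^ (4 + k) := by ring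
      rw [this, pow_mul, sgA9, one_pow, ofMul_one]⟩ 1
  simp only [Int.cast_one, zmultiplesHom_apply, one_zsmul] at h
  exact congrArg Additive.toMul h

end BB

section rel
open RR
variable {U : Type} [Group U] (j : BB →* U) (x : U)

theorem aux_mul0 (a b : RR) : (⟨0, a⟩ : BB) * ⟨0, b⟩ = ⟨0, a + b⟩ := by
  ext <;> simp [BB.mul_def, BB.kk0, p0]
theorem aux_inv0 (a : RR) : (⟨0, a⟩ : BB)⁻¹ = ⟨0, -a⟩ := by
  ext <;> simp [BB.inv_def, BB.kk0, p0]
theorem aux_pow0 (a : RR) (n : ℕ) : (⟨0, a⟩ : BB) ^ n = ⟨0, n * a⟩ := by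
  induction n with
  | zero => ext <;> simp [BB.one_def]
  | succ n ih => rw [pow_succ, ih, aux_mul0]; ext <;> simp; ring
theorem aux_sg0 (a : RR) : BB.sg ⟨0, a⟩ = ⟨0, (1 + X) * a⟩ := by
  rw [BB.sg_apply]; ext
  · rfl
  · show (0 : RR) + _ = _
    ring

theorem rel_pow (hx : ∀ b, x⁻¹ * j b * x = j (BB.sg b)) (n : ℕ) (b : BB) :
    (x ^ n)⁻¹ * j b * x ^ n = j ((BB.sg^[n]) b) := by
  induction n with
  | zero => simp
  | succ n ih =>
    rw [Function.iterate_succ_apply', ← hx, ← ih, pow_succ]; group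

theorem rel_c0 (hx : ∀ b, x⁻¹ * j b * x = j (BB.sg b)) : comm' (j ⟨1, 0⟩) x = j ⟨0, 1⟩ := by
  have : comm' (j ⟨1, 0⟩) x = (j ⟨1, 0⟩)⁻¹ * (x⁻¹ * j ⟨1, 0⟩ * x) := by unfold comm'; group
  rw [this, hx, inv_mul_eq_iff_eq_mul, ← map_mul]
  congr 1

theorem rel_cX (hx : ∀ b, x⁻¹ * j b * x = j (BB.sg b)) (a : RR) :
    comm' (j ⟨0, a⟩) x = j ⟨0, X * a⟩ := by
  have : comm' (j ⟨0, a⟩) x = (j ⟨0, a⟩)⁻¹ * (x⁻¹ * j ⟨0, a⟩ * x) := by unfold comm'; group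
  rw [this, hx, inv_mul_eq_iff_eq_mul, ← map_mul, aux_mul0, aux_sg0]
  congr 2; ring

theorem rel_cY (a : RR) : comm' (j ⟨0, a⟩) (j ⟨1, 0⟩) = j ⟨0, Y * a⟩ := by
  have : comm' (j ⟨0, a⟩) (j ⟨1, 0⟩) = (j ⟨1, 0⟩ * j ⟨0, a⟩)⁻¹ * (j ⟨0, a⟩ * j ⟨1, 0⟩) := by
    unfold comm'; group
  rw [this, inv_mul_eq_iff_eq_mul, ← map_mul, ← map_mul, ← map_mul]
  congr 1
  ext <;> simp [BB.mul_def, BB.kk0, BB.kk0', p0, p1]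
  ring

theorem rel_s (hx : ∀ b, x⁻¹ * j b * x = j (BB.sg b)) (n : ℕ) :
    sgen x (j ⟨1, 0⟩) (n + 2) = j ⟨0, X ^ n⟩ := by
  induction n with
  | zero => simpa [sgen] using rel_c0 j x hx
  | succ n ih => rw [sgen, ih, rel_cX j x hx, pow_succ']

theorem rel_t (hx : ∀ b, x⁻¹ * j b * x = j (BB.sg b)) (n : ℕ) :
    tgenB x (j ⟨1, 0⟩) (n + 2) = j ⟨0, Y ^ n⟩ := by
  induction n with
  | zero => simpa [tgenB] using rel_c0 j x hx
  | succ n ih => rw [tgenB, ih, rel_cY j, pow_succ']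

theorem rel_x3 (hx : ∀ b, x⁻¹ * j b * x = j (BB.sg b)) (b c : BB)
    (h : (BB.sg^[3]) b * c = b) : comm' (x ^ 3) (j b) = j c := by
  have : comm' (x ^ 3) (j b) = ((x ^ 3)⁻¹ * j b * x ^ 3)⁻¹ * j b := by unfold comm'; group
  rw [this, rel_pow j x hx, inv_mul_eq_iff_eq_mul, ← map_mul, h]

theorem rel_all (hx : ∀ b, x⁻¹ * j b * x = j (BB.sg b)) (y : U) (hy : y = j ⟨1, 0⟩) :
      y ^ 3 = sgen x y 3 * sgen x y 4 ^ 2 ∧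
      sgen x y 2 ^ 3 = sgen x y 4 * tgenB x y 4 ^ 2 ∧
      sgen x y 3 ^ 3 = sgen x y 5 ∧
      tgenB x y 3 ^ 3 = sgen x y 5 ^ 2 ∧
      comm' (x ^ 3) y = sgen x y 4 * tgenB x y 4 * sgen x y 5 ^ 2 ∧
      comm' (x ^ 3) (sgen x y 2) = sgen x y 5 ∧
      tgenB x y 5 = sgen x y 5 := by
  subst hy
  have s2 := rel_s j x hx 0
  have s3 := rel_s j x hx 1
  have s4 := rel_s j x hx 2
  have s5 := rel_s j x hx 3
  have t3 := rel_t j x hx 1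
  have t4 := rel_t j x hx 2
  have t5 := rel_t j x hx 3
  norm_num at s2 s3 s4 s5 t3 t4 t5
  rw [s2, s3, s4, s5, t3, t4, t5]
  simp only [← map_pow, ← map_mul, aux_pow0, aux_mul0]
  refine ⟨?_, ?_, ?_, ?_, ?_, ?_, ?_⟩
  · congr 1
  · congr 2; push_cast; linear_combination h3
  · congr 2; push_cast; linear_combination h3X
  · congr 2; push_cast; linear_combination h3Y
  · apply rel_x3 j x hx
    rw [BB.sg_iter, BB.mul_def]
    ext
    · simp
    · have : q 1 = 1 := rfl
      simp only [BB.kk0', p0, this, Finset.sum_range_succ, Finset.sum_range_zero]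
      push_cast
      linear_combination h3 + h3X + h3XX + h3YY + h3XXX
  · apply rel_x3 j x hx
    rw [BB.sg_iter, BB.mul_def]
    ext
    · simp
    · have : q 0 = 0 := rfl
      simp only [BB.kk0', p0, this, hx3]
      push_cast
      linear_combination h3XXX
  · congr 2; exact hX3.symm

/-- A subgroup containing `[y,x]` and normalised in the sense of commutators contains all of `A`. -/
theorem rel_mem (hx : ∀ b, x⁻¹ * j b * x = j (BB.sg b)) (H : Subgroup U)
    (h1 : comm' (j ⟨1, 0⟩) x ∈ H) (hX : ∀ g ∈ H, comm' g x ∈ H)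
    (hY : ∀ g ∈ H, comm' g (j ⟨1, 0⟩) ∈ H) (a : RR) : j ⟨0, a⟩ ∈ H := by
  let T : AddSubgroup RR :=
    { carrier := {a | j ⟨0, a⟩ ∈ H}
      zero_mem' := by
        show j 1 ∈ H
        rw [map_one]; exact H.one_mem
      add_mem' := by
        intro a b ha hb
        show j ⟨0, a + b⟩ ∈ H
        rw [← aux_mul0, map_mul]; exact H.mul_mem ha hb
      neg_mem' := by
        intro a ha
        show j ⟨0, -a⟩ ∈ H
        rw [← aux_inv0, map_inv]; exact H.inv_mem ha }
  refine top_of T ?_ ?_ ?_ a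
  · show j ⟨0, 1⟩ ∈ H
    rw [← rel_c0 j x hx]; exact h1
  · intro a ha
    show j ⟨0, X * a⟩ ∈ H
    rw [← rel_cX j x hx]; exact hX _ ha
  · intro a ha
    show j ⟨0, Y * a⟩ ∈ H
    rw [← rel_cY j]; exact hY _ ha
end rel

section grp
variable (e : ℕ) (he : 5 ≤ e)

abbrev UU : Type := BB ⋊[BB.phi e he] Multiplicative (ZMod (3 ^ (e + 1)))

theorem phi_i (r : Multiplicative (ZMod (3 ^ (e + 1)))) (b : BB) : (BB.phi e he r b).i = b.i := by
  obtain ⟨n, hn⟩ := ZMod.natCast_zmod_surjective (Multiplicative.toAdd r)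
  have : r = (Multiplicative.ofAdd 1) ^ n := by
    rw [← ofAdd_nsmul, nsmul_one, hn]; rfl
  rw [this, map_pow, BB.phi_one, BB.sgA_pow, BB.sg_iter]

def abF : UU e he →* Multiplicative (ZMod (3 ^ (e + 1)) × ZMod 3) where
  toFun g := Multiplicative.ofAdd (Multiplicative.toAdd g.right, g.left.i)
  map_one' := rfl
  map_mul' g h := by
    rw [← ofAdd_add]
    congr 1
    ext
    · rfl
    · show g.left.i + (BB.phi e he g.right h.left).i = g.left.i + h.left.i
      rw [phi_i]

theorem abF_surj : Function.Surjective (abF e he) := by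
  intro t
  exact ⟨⟨⟨(Multiplicative.toAdd t).2, 0⟩, Multiplicative.ofAdd (Multiplicative.toAdd t).1⟩, rfl⟩

theorem abF_ker (g : UU e he) (hg : abF e he g = 1) :
    ∃ a, g = SemidirectProduct.inl ⟨0, a⟩ := by
  have h : (Multiplicative.toAdd g.right, g.left.i) = (0, 0) := hg
  rw [Prod.mk.injEq] at h
  refine ⟨g.left.a, ?_⟩
  ext1
  · ext
    · exact h.2
    · rfl
  · exact h.1

theorem comm_mem {G : Type*} [Group G] (a b : G) : comm' a b ∈ commutator G := by
  have := Subgroup.commutator_mem_commutator (Subgroup.mem_top a⁻¹) (Subgroup.mem_top b⁻¹)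
  rwa [commutatorElement_def, inv_inv, inv_inv] at this

theorem comm_eq (x : UU e he)
    (hx : ∀ b, x⁻¹ * SemidirectProduct.inl b * x = SemidirectProduct.inl (BB.sg b)) :
    commutator (UU e he) = (abF e he).ker := by
  apply le_antisymm
  · exact Abelianization.commutator_subset_ker _
  · intro g hg
    obtain ⟨a, rfl⟩ := abF_ker e he g hg
    exact rel_mem SemidirectProduct.inl x hx _ (comm_mem _ _) (fun _ _ => comm_mem _ _)
      (fun _ _ => comm_mem _ _) a

/-- the generator `x` -/
def genx : UU e he := (SemidirectProduct.inr (Multiplicative.ofAdd 1))⁻¹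
/-- the generator `y` -/
def geny : UU e he := SemidirectProduct.inl ⟨1, 0⟩

theorem geny_def : geny e he = (SemidirectProduct.inl : BB →* UU e he) ⟨1, 0⟩ := by
  unfold geny; with_reducible rfl

theorem genx_conj (b : BB) : (genx e he)⁻¹ * SemidirectProduct.inl b * genx e he
    = SemidirectProduct.inl (BB.sg b) := by
  have h := SemidirectProduct.inl_aut (φ := BB.phi e he) (Multiplicative.ofAdd 1) b
  rw [BB.phi_one] at h
  unfold genx
  rw [inv_inv, ← map_inv]
  exact h.symm

theorem gen_top : Subgroup.closure {genx e he, geny e he} = ⊤ := by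
  have : NeZero (3 ^ (e + 1)) := ⟨by positivity⟩
  set H := Subgroup.closure {genx e he, geny e he} with hH
  have hxH : genx e he ∈ H := Subgroup.subset_closure (by simp)
  have hyH : geny e he ∈ H := Subgroup.subset_closure (by simp)
  have hc : ∀ a b : UU e he, a ∈ H → b ∈ H → comm' a b ∈ H := fun a b ha hb =>
    H.mul_mem (H.mul_mem (H.mul_mem (H.inv_mem ha) (H.inv_mem hb)) ha) hb
  have hA := rel_mem SemidirectProduct.inl (genx e he) (genx_conj e he) H (hc _ _ hyH hxH)
    (fun g hg => hc _ _ hg hxH) (fun g hg => hc _ _ hg hyH)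
  rw [eq_top_iff]
  intro g _
  obtain ⟨n, hn⟩ := ZMod.natCast_zmod_surjective (Multiplicative.toAdd g.right)
  obtain ⟨m, hm⟩ := ZMod.natCast_zmod_surjective g.left.i
  have hk : abF e he ((geny e he ^ m)⁻¹ * (genx e he ^ n * g)) = 1 := by
    have e1 : abF e he (genx e he) = Multiplicative.ofAdd (-1, 0) := by
      unfold genx
      rw [map_inv]
      have : abF e he (SemidirectProduct.inr (Multiplicative.ofAdd 1))
        = Multiplicative.ofAdd (1, 0) := rfl
      rw [this, ← ofAdd_neg]; simp
    have e2 : abF e he (geny e he) = Multiplicative.ofAdd (0, 1) := rfl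
    have e3 : abF e he g = Multiplicative.ofAdd ((n : ZMod (3 ^ (e + 1))), (m : ZMod 3)) := by
      rw [hn, hm]; rfl
    rw [map_mul, map_mul, map_inv, map_pow, map_pow, e1, e2, e3, ← ofAdd_nsmul, ← ofAdd_nsmul,
      ← ofAdd_neg, ← ofAdd_add, ← ofAdd_add, ofAdd_eq_one]
    simp
  obtain ⟨a, ha⟩ := abF_ker e he _ hk
  have := hA a
  rw [← ha] at this
  have h2 := (H.mul_mem_cancel_left (H.inv_mem (H.pow_mem hyH m))).1 this
  exact (H.mul_mem_cancel_left (H.pow_mem hxH n)).1 h2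

theorem UU_finite : Finite (UU e he) := by
  have : NeZero (3 ^ (e + 1)) := ⟨by positivity⟩
  have : Finite (Multiplicative (ZMod (3 ^ (e + 1)))) :=
    inferInstanceAs (Finite (ZMod (3 ^ (e + 1))))
  exact Finite.of_equiv _ SemidirectProduct.equivProd.symm

theorem UU_card : Nat.card (UU e he) = 3 ^ (e + 8) := by
  rw [Nat.card_congr SemidirectProduct.equivProd, Nat.card_prod, BB.card]
  have : Nat.card (Multiplicative (ZMod (3 ^ (e + 1)))) = 3 ^ (e + 1) := Nat.card_zmod _
  rw [this]; ring

theorem UU_comm : commutator (UU e he) = (abF e he).ker :=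
  comm_eq e he (genx e he) (genx_conj e he)

theorem UU_metab : IsMetabelian (UU e he) := by
  unfold IsMetabelian
  rw [derivedSeries_succ, derivedSeries_one, UU_comm,
    Subgroup.commutator_eq_bot_iff_le_centralizer]
  intro g hg
  rw [Subgroup.mem_centralizer_iff]
  intro h hh
  obtain ⟨a, rfl⟩ := abF_ker e he g hg
  obtain ⟨b, rfl⟩ := abF_ker e he h hh
  rw [← map_mul, ← map_mul, aux_mul0, aux_mul0, add_comm a b]

theorem genx_pow : genx e he ^ 3 ^ (e + 1) = 1 := by
  unfold genx
  have h : (Multiplicative.ofAdd (1 : ZMod (3 ^ (e + 1)))) ^ 3 ^ (e + 1) = 1 := by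
    rw [← ofAdd_nsmul, nsmul_eq_mul, ZMod.natCast_self, zero_mul, ofAdd_zero]
  rw [inv_pow, ← map_pow, h, map_one, inv_one]

theorem UU_ab :
    Nonempty (Abelianization (UU e he) ≃* Multiplicative (ZMod (3 ^ (e + 1)) × ZMod 3)) :=
  ⟨(QuotientGroup.quotientMulEquivOfEq (UU_comm e he)).trans
      (QuotientGroup.quotientKerEquivOfSurjective _ (abF_surj e he))⟩
end grp

theorem pack (e : ℕ) {U : Type} [Group U] [hfin : Finite U] (x y : U) (j : BB →* U)
    (hx : ∀ b, x⁻¹ * j b * x = j (BB.sg b)) (hy : y = j ⟨1, 0⟩)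
    (h1 : Subgroup.closure {x, y} = ⊤) (h2 : Nat.card U = 3 ^ (e + 8)) (h3 : IsMetabelian U)
    (h4 : x ^ 3 ^ (e + 1) = 1)
    (h5 : Nonempty (Abelianization U ≃* Multiplicative (ZMod (3 ^ (e + 1)) × ZMod 3))) :
    ∃ (U : Type) (_ : Group U) (_ : Finite U) (x y : U),
      Subgroup.closure {x, y} = ⊤ ∧
      Nat.card U = 3 ^ (e + 8) ∧
      IsMetabelian U ∧
      x ^ 3 ^ (e + 1) = 1 ∧
      y ^ 3 = sgen x y 3 * sgen x y 4 ^ 2 ∧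
      sgen x y 2 ^ 3 = sgen x y 4 * tgenB x y 4 ^ 2 ∧
      sgen x y 3 ^ 3 = sgen x y 5 ∧
      tgenB x y 3 ^ 3 = sgen x y 5 ^ 2 ∧
      comm' (x ^ 3) y = sgen x y 4 * tgenB x y 4 * sgen x y 5 ^ 2 ∧
      comm' (x ^ 3) (sgen x y 2) = sgen x y 5 ∧
      tgenB x y 5 = sgen x y 5 ∧
      Nonempty (Abelianization U ≃* Multiplicative (ZMod (3 ^ (e + 1)) × ZMod 3)) := by
  obtain ⟨r1, r2, r3, r4, r5, r6, r7⟩ := rel_all j x hx y hy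
  exact ⟨U, _, hfin, x, y, h1, h2, h3, h4, r1, r2, r3, r4, r5, r6, r7, h5⟩

theorem stmt17 (e : ℕ) (he : 5 ≤ e) :
    ∃ (U : Type) (_ : Group U) (_ : Finite U) (x y : U),
      Subgroup.closure {x, y} = ⊤ ∧
      Nat.card U = 3 ^ (e + 8) ∧
      IsMetabelian U ∧
      x ^ 3 ^ (e + 1) = 1 ∧
      y ^ 3 = sgen x y 3 * sgen x y 4 ^ 2 ∧
      sgen x y 2 ^ 3 = sgen x y 4 * tgenB x y 4 ^ 2 ∧
      sgen x y 3 ^ 3 = sgen x y 5 ∧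
      tgenB x y 3 ^ 3 = sgen x y 5 ^ 2 ∧
      comm' (x ^ 3) y = sgen x y 4 * tgenB x y 4 * sgen x y 5 ^ 2 ∧
      comm' (x ^ 3) (sgen x y 2) = sgen x y 5 ∧
      tgenB x y 5 = sgen x y 5 ∧
      Nonempty (Abelianization U ≃* Multiplicative (ZMod (3 ^ (e + 1)) × ZMod 3)) := by
  have := UU_finite e he
  exact pack e (genx e he) (geny e he) SemidirectProduct.inl (genx_conj e he) (geny_def e he)
    (gen_top e he) (UU_card e he) (UU_metab e he) (genx_pow e he) (UU_ab e he)
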